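/- arXiv:1907.08735 — 3 statements merged into one kernel-verified Lean document; each statement's English description precedes it below -/
import Mathlib

section
/- For every arrival sequence S = (s_1, …, s_T) with all s_t ∈ (0,1], the randomized threshold algorithm that draws τ from the probability measure μ₁ on [0,1] with CDF F₁ and then runs THR(τ) satisfies ∫_{[0,1]} THR(τ)(S) dμ₁(τ) ≥ (3/7)·OPT⁺(S). -/
/-!
If `τ ≤ s` for an item `s`, then `THR(τ)` either packs at least `s` or is filled beyond `1 - s`,
so it always gains `min s (1 - s)`. Let `g` be the value of greedy, that is, of `THR(0)`. If greedy
packs everything, the atom `4/7` at `0` suffices. Otherwise some item `b` overflows greedy, so that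
`1 - b < g`.

* An item in `[3/7, 1/2]` alone guarantees `3/7` for every threshold.
* If `b ≤ 3/7`, greedy gains `1 - b` and thresholds in `(0, b]` gain `b`; the excess of the
  resulting bound over `3/7` is a positive multiple of `(1 - 3b)²`.
* If `b` is larger and no item lies in `[3/7, 1/2]`, let `a` be the largest item below `3/7`. The
  thresholds in `(0, a]` gain `a`, and those in `(a, 3/7]` accept an item above `1/2`, whose size is
  at least `1 - g` because greedy also had a chance to pack it. The worst case `g = a` gives
  `F₁(a) a + (1 - F₁(a)) (1 - a)`, and `F₁` is the function that makes this equal to `3/7`.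
-/

open MeasureTheory Set

/-- Value of the threshold policy `THR(τ)` on arrival sequence `S`:
process items in order, accept an item of size `s` iff `τ ≤ s` and it fits the
remaining capacity; return the total size accepted. -/
noncomputable def thrVal (τ : ℝ) (S : List ℝ) : ℝ :=
  S.foldl (fun acc s => if τ ≤ s ∧ acc + s ≤ 1 then acc + s else acc) 0

/-- The CDF `F₁` of the 3/7-competitive threshold distribution:
`F₁(x) = (4/7 − x)/(1 − 2x)` on `[0, 3/7]` and `F₁(x) = 1` for `x > 3/7`
(in particular an atom of mass 4/7 at 0). -/
noncomputable def F1 (x : ℝ) : ℝ :=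
  if x < 0 then 0 else if x ≤ 3/7 then (4/7 - x) / (1 - 2*x) else 1

section StepBound

variable {α : Type*} [LinearOrder α] [TopologicalSpace α] [OrderClosedTopology α]
  [MeasurableSpace α] [OpensMeasurableSpace α]

lemma three_step_le_integral {ν : Measure α} [IsFiniteMeasure ν] {f : α → ℝ}
    (hf : Integrable f ν) (hf0 : 0 ≤ f) {a b c : α} (hab : a ≤ b) (hbc : b ≤ c) {u v w : ℝ}
    (hu : ∀ x ∈ Iic a, u ≤ f x) (hv : ∀ x ∈ Ioc a b, v ≤ f x) (hw : ∀ x ∈ Ioc b c, w ≤ f x) :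
    u * ν.real (Iic a) + v * ν.real (Ioc a b) + w * ν.real (Ioc b c) ≤ ∫ x, f x ∂ν := by
  have const_le {r : ℝ} {A : Set α} (hA : MeasurableSet A) (hr : ∀ x ∈ A, r ≤ f x) :
      r * ν.real A ≤ ∫ x in A, f x ∂ν :=
    setIntegral_ge_of_const_le_real hA (measure_ne_top ν A) hr hf.integrableOn
  calc u * ν.real (Iic a) + v * ν.real (Ioc a b) + w * ν.real (Ioc b c)
      ≤ (∫ x in Iic a, f x ∂ν) + (∫ x in Ioc a b, f x ∂ν) + ∫ x in Ioc b c, f x ∂ν :=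
        add_le_add (add_le_add (const_le measurableSet_Iic hu) (const_le measurableSet_Ioc hv))
          (const_le measurableSet_Ioc hw)
    _ = ∫ x in Iic c, f x ∂ν := by
        rw [← setIntegral_union (Iic_disjoint_Ioc le_rfl) measurableSet_Ioc hf.integrableOn
            hf.integrableOn, Iic_union_Ioc_eq_Iic hab,
          ← setIntegral_union (Iic_disjoint_Ioc le_rfl) measurableSet_Ioc hf.integrableOn
            hf.integrableOn, Iic_union_Ioc_eq_Iic hbc]
    _ ≤ ∫ x, f x ∂ν := setIntegral_le_integral hf (ae_of_all ν hf0)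

end StepBound

section ThresholdPolicy

/-- The final load of the threshold policy `THR(τ)` on `S` when total size `acc` has been accepted
before the first item of `S`; a general `acc` is what makes induction on `S` possible. -/
noncomputable def thrRun (τ acc : ℝ) (S : List ℝ) : ℝ :=
  S.foldl (fun acc s => if τ ≤ s ∧ acc + s ≤ 1 then acc + s else acc) acc

variable {τ acc s v : ℝ} {S : List ℝ}

lemma thrRun_cons (τ acc s : ℝ) (S : List ℝ) :
    thrRun τ acc (s :: S) = thrRun τ (if τ ≤ s ∧ acc + s ≤ 1 then acc + s else acc) S := rfl

lemma thrRun_cons_of_le_of_le (hτ : τ ≤ s) (hfit : acc + s ≤ 1) :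
    thrRun τ acc (s :: S) = thrRun τ (acc + s) S := by
  rw [thrRun_cons, if_pos ⟨hτ, hfit⟩]

lemma thrRun_cons_of_lt_threshold (hτ : s < τ) : thrRun τ acc (s :: S) = thrRun τ acc S := by
  rw [thrRun_cons, if_neg fun h => hτ.not_ge h.1]

lemma thrRun_cons_of_overflow (hover : 1 < acc + s) :
    thrRun τ acc (s :: S) = thrRun τ acc S := by
  rw [thrRun_cons, if_neg fun h => hover.not_ge h.2]

lemma thrVal_eq_thrRun (τ : ℝ) (S : List ℝ) : thrVal τ S = thrRun τ 0 S := rfl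

lemma le_thrRun (hS : ∀ s ∈ S, 0 ≤ s) (τ acc : ℝ) : acc ≤ thrRun τ acc S := by
  induction S generalizing acc with
  | nil => exact le_rfl
  | cons x S ih =>
    rw [List.forall_mem_cons] at hS
    rw [thrRun_cons]
    refine le_trans ?_ (ih hS.2 _)
    split_ifs <;> linarith [hS.1]

lemma thrRun_le_one (τ : ℝ) (S : List ℝ) (hacc : acc ≤ 1) : thrRun τ acc S ≤ 1 := by
  induction S generalizing acc with
  | nil => exact hacc
  | cons x S ih =>
    rw [thrRun_cons]
    apply ih
    split_ifs with h
    exacts [h.2, hacc]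

lemma min_self_one_sub_le_thrRun (hS : ∀ s ∈ S, 0 ≤ s) (hacc : 0 ≤ acc) (hs : s ∈ S)
    (hτ : τ ≤ s) : min s (1 - s) ≤ thrRun τ acc S := by
  induction S generalizing acc with
  | nil => simp at hs
  | cons x S ih =>
    rw [List.forall_mem_cons] at hS
    rcases List.mem_cons.1 hs with rfl | hs
    · rcases le_or_gt (acc + s) 1 with hfit | hover
      · rw [thrRun_cons_of_le_of_le hτ hfit]
        linarith [min_le_left s (1 - s), le_thrRun hS.2 τ (acc + s)]
      · rw [thrRun_cons_of_overflow hover]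
        linarith [min_le_right s (1 - s), le_thrRun hS.2 τ acc]
    · rw [thrRun_cons]
      refine ih hS.2 ?_ hs
      split_ifs <;> linarith [hS.1]

lemma thrRun_eq_add_sum_or_exists_one_sub_lt (hS : ∀ s ∈ S, 0 ≤ s) (hτ : ∀ s ∈ S, τ ≤ s)
    (acc : ℝ) : thrRun τ acc S = acc + S.sum ∨ ∃ s ∈ S, 1 - s < thrRun τ acc S := by
  induction S generalizing acc with
  | nil => simp [thrRun]
  | cons x S ih =>
    rw [List.forall_mem_cons] at hS hτ
    rcases le_or_gt (acc + x) 1 with hfit | hover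
    · rw [thrRun_cons_of_le_of_le hτ.1 hfit, List.sum_cons, ← add_assoc]
      exact (ih hS.2 hτ.2 (acc + x)).imp_right
        fun ⟨s, hs, hlt⟩ => ⟨s, List.mem_cons_of_mem x hs, hlt⟩
    · rw [thrRun_cons_of_overflow hover]
      exact Or.inr ⟨x, List.mem_cons_self, by linarith [le_thrRun hS.2 τ acc]⟩

lemma measurable_thrRun (S : List ℝ) {f : ℝ → ℝ} (hf : Measurable f) :
    Measurable fun τ => thrRun τ (f τ) S := by
  induction S generalizing f with
  | nil => exact hf
  | cons s S ih =>
    simp only [thrRun_cons]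
    refine ih (Measurable.ite ?_ (hf.add_const s) hf)
    exact (measurableSet_le measurable_id measurable_const).inter
      (measurableSet_le (hf.add_const s) measurable_const)

lemma thrVal_nonneg (hS : ∀ s ∈ S, 0 ≤ s) (τ : ℝ) : 0 ≤ thrVal τ S :=
  le_thrRun hS τ 0

lemma min_self_one_sub_le_thrVal (hS : ∀ s ∈ S, 0 ≤ s) (hs : s ∈ S) (hτ : τ ≤ s) :
    min s (1 - s) ≤ thrVal τ S :=
  min_self_one_sub_le_thrRun hS le_rfl hs hτ

lemma le_thrVal_of_le_half (hS : ∀ s ∈ S, 0 ≤ s) (hs : s ∈ S) (hτ : τ ≤ s) (hhalf : s ≤ 1 / 2) :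
    s ≤ thrVal τ S :=
  (le_min le_rfl (by linarith)).trans (min_self_one_sub_le_thrVal hS hs hτ)

lemma one_sub_le_thrVal_of_half_le (hS : ∀ s ∈ S, 0 ≤ s) (hs : s ∈ S) (hτ : τ ≤ s)
    (hhalf : 1 / 2 ≤ s) : 1 - s ≤ thrVal τ S :=
  (le_min (by linarith) le_rfl).trans (min_self_one_sub_le_thrVal hS hs hτ)

lemma le_thrVal_of_forall_le (hS : ∀ s ∈ S, s ∈ Icc (0 : ℝ) 1) (hv : ∀ s ∈ S, τ ≤ s → v ≤ s)
    (hex : ∃ s ∈ S, τ ≤ s) : v ≤ thrVal τ S := by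
  rw [thrVal_eq_thrRun]
  induction S with
  | nil => simp at hex
  | cons x S ih =>
    rw [List.forall_mem_cons] at hS hv
    rcases le_or_gt τ x with hx | hx
    · rw [thrRun_cons_of_le_of_le hx (by linarith [hS.1.2]), zero_add]
      exact (hv.1 hx).trans (le_thrRun (fun s hs => (hS.2 s hs).1) τ x)
    · rw [thrRun_cons_of_lt_threshold hx]
      exact ih hS.2 hv.2 ((List.exists_mem_cons_iff ..).1 hex |>.resolve_left hx.not_ge)

lemma thrVal_eq_thrVal_of_forall_le {τ' : ℝ} (hτ : ∀ s ∈ S, τ ≤ s) (hτ' : ∀ s ∈ S, τ' ≤ s) :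
    thrVal τ S = thrVal τ' S := by
  refine List.foldl_ext _ _ _ fun acc s hs => ?_
  simp only [hτ s hs, hτ' s hs]

lemma integrable_thrVal {ν : Measure ℝ} [IsFiniteMeasure ν] (hS : ∀ s ∈ S, 0 ≤ s) :
    Integrable (fun τ => thrVal τ S) ν :=
  .of_mem_Icc 0 1 (measurable_thrRun S measurable_const).aemeasurable
    (ae_of_all ν fun τ => ⟨thrVal_nonneg hS τ, thrRun_le_one τ S zero_le_one⟩)

end ThresholdPolicy

section ThresholdDistribution

variable {x g : ℝ}

lemma F1_of_mem (hx : x ∈ Icc (0 : ℝ) (3 / 7)) : F1 x = (4 / 7 - x) / (1 - 2 * x) := by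
  rw [F1, if_neg hx.1.not_gt, if_pos hx.2]

lemma F1_zero : F1 0 = 4 / 7 := by
  rw [F1_of_mem (by norm_num)]
  norm_num

lemma F1_three_sevenths : F1 (3 / 7) = 1 := by
  rw [F1_of_mem (by norm_num)]
  norm_num

lemma F1_nonneg (x : ℝ) : 0 ≤ F1 x := by
  rw [F1]
  split_ifs
  · exact le_rfl
  · exact div_nonneg (by linarith) (by linarith)
  · exact zero_le_one

lemma four_sevenths_le_F1 (hx : x ∈ Icc (0 : ℝ) (3 / 7)) : 4 / 7 ≤ F1 x := by
  rw [F1_of_mem hx, le_div_iff₀ (by linarith [hx.2])]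
  linarith [hx.1]

lemma F1_mul_self_add_one_sub_mul_one_sub (hx : x ∈ Icc (0 : ℝ) (3 / 7)) :
    F1 x * x + (1 - F1 x) * (1 - x) = 3 / 7 := by
  have hmul : F1 x * (1 - 2 * x) = 4 / 7 - x := by
    rw [F1_of_mem hx, div_mul_cancel₀]
    linarith [hx.2]
  linear_combination -hmul

lemma three_sevenths_le_two_step_of_one_sub_le (hx : x ∈ Icc (0 : ℝ) (3 / 7)) (hg : 1 - x ≤ g) :
    3 / 7 ≤ 4 / 7 * g + (F1 x - 4 / 7) * x := by
  have hden : 0 < 1 - 2 * x := by linarith [hx.2]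
  have hsq : 0 ≤ (4 / 7 * (1 - x) + (F1 x - 4 / 7) * x - 3 / 7) * (1 - 2 * x) := by
    linear_combination (1 / 7) * sq_nonneg (1 - 3 * x) + x * F1_mul_self_add_one_sub_mul_one_sub hx
  linarith [nonneg_of_mul_nonneg_left hsq hden]

lemma three_sevenths_le_three_step_of_le (hx : x ∈ Icc (0 : ℝ) (3 / 7)) (hg : x ≤ g) :
    3 / 7 ≤ 4 / 7 * g + (F1 x - 4 / 7) * x + (1 - F1 x) * (1 - g) := by
  have hslope : 0 ≤ (F1 x - 3 / 7) * (g - x) :=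
    mul_nonneg (by linarith [four_sevenths_le_F1 hx]) (sub_nonneg.2 hg)
  linear_combination hslope - F1_mul_self_add_one_sub_mul_one_sub hx

end ThresholdDistribution

section ExpectedValue

variable {μ : Measure ℝ} {S : List ℝ}

lemma measureReal_Iic_eq_F1 (hμ : ∀ x : ℝ, μ (Iic x) = ENNReal.ofReal (F1 x)) (x : ℝ) :
    μ.real (Iic x) = F1 x := by
  rw [measureReal_def, hμ, ENNReal.toReal_ofReal (F1_nonneg x)]

variable [IsFiniteMeasure μ]

lemma measureReal_Ioc_eq_F1_sub (hμ : ∀ x : ℝ, μ (Iic x) = ENNReal.ofReal (F1 x)) {x y : ℝ}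
    (hxy : x ≤ y) : μ.real (Ioc x y) = F1 y - F1 x := by
  rw [← Iic_sdiff_Iic, measureReal_sdiff (Iic_subset_Iic.2 hxy) measurableSet_Iic,
    measureReal_Iic_eq_F1 hμ, measureReal_Iic_eq_F1 hμ]

lemma three_step_le_integral_thrVal (hμ : ∀ x : ℝ, μ (Iic x) = ENNReal.ofReal (F1 x))
    (hS : ∀ s ∈ S, 0 ≤ s) {a u v w : ℝ} (ha : a ∈ Icc (0 : ℝ) (3 / 7)) (hu : u ≤ thrVal 0 S)
    (hv : ∀ τ ∈ Ioc 0 a, v ≤ thrVal τ S) (hw : ∀ τ ∈ Ioc a (3 / 7), w ≤ thrVal τ S) :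
    4 / 7 * u + (F1 a - 4 / 7) * v + (1 - F1 a) * w ≤ ∫ τ, thrVal τ S ∂μ := by
  have hu' : ∀ τ ∈ Iic (0 : ℝ), u ≤ thrVal τ S := fun τ hτ =>
    hu.trans_eq (thrVal_eq_thrVal_of_forall_le hS fun s hs => hτ.trans (hS s hs))
  have hbound := three_step_le_integral (integrable_thrVal (ν := μ) hS) (thrVal_nonneg hS)
    ha.1 ha.2 hu' hv hw
  rw [measureReal_Iic_eq_F1 hμ, measureReal_Ioc_eq_F1_sub hμ ha.1,
    measureReal_Ioc_eq_F1_sub hμ ha.2, F1_zero, F1_three_sevenths] at hbound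
  linarith

lemma four_sevenths_mul_thrVal_zero_le_integral_thrVal
    (hμ : ∀ x : ℝ, μ (Iic x) = ENNReal.ofReal (F1 x)) (hS : ∀ s ∈ S, 0 ≤ s) :
    4 / 7 * thrVal 0 S ≤ ∫ τ, thrVal τ S ∂μ := by
  have hbound := three_step_le_integral_thrVal hμ hS (a := 0) (by norm_num) le_rfl
    (fun τ _ => thrVal_nonneg hS τ) (fun τ _ => thrVal_nonneg hS τ)
  linarith

lemma three_sevenths_le_integral_thrVal_of_medium_item
    (hμ : ∀ x : ℝ, μ (Iic x) = ENNReal.ofReal (F1 x)) (hS : ∀ s ∈ S, 0 ≤ s) {b : ℝ} (hb : b ∈ S)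
    (hmedium : b ∈ Icc (3 / 7 : ℝ) (1 / 2)) : 3 / 7 ≤ ∫ τ, thrVal τ S ∂μ := by
  have hval (τ : ℝ) (hτ : τ ≤ 3 / 7) : 3 / 7 ≤ thrVal τ S :=
    hmedium.1.trans (le_thrVal_of_le_half hS hb (hτ.trans hmedium.1) hmedium.2)
  have hbound := three_step_le_integral_thrVal hμ hS (a := 0) (by norm_num)
    (hval 0 (by norm_num)) (fun τ hτ => hval τ (by linarith [hτ.2])) (fun τ hτ => hval τ hτ.2)
  linarith

lemma three_sevenths_le_integral_thrVal_of_small_overflow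
    (hμ : ∀ x : ℝ, μ (Iic x) = ENNReal.ofReal (F1 x)) (hS : ∀ s ∈ S, 0 ≤ s) {b : ℝ} (hb : b ∈ S)
    (hsmall : b ≤ 3 / 7) (hover : 1 - b ≤ thrVal 0 S) : 3 / 7 ≤ ∫ τ, thrVal τ S ∂μ := by
  have hbI : b ∈ Icc (0 : ℝ) (3 / 7) := ⟨hS b hb, hsmall⟩
  have hbound := three_step_le_integral_thrVal hμ hS hbI le_rfl
    (fun τ hτ => le_thrVal_of_le_half hS hb hτ.2 (by linarith)) (fun τ _ => thrVal_nonneg hS τ)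
  linarith [three_sevenths_le_two_step_of_one_sub_le hbI hover]

lemma three_sevenths_le_integral_thrVal_of_large_item
    (hμ : ∀ x : ℝ, μ (Iic x) = ENNReal.ofReal (F1 x)) (hS : ∀ s ∈ S, s ∈ Icc (0 : ℝ) 1)
    (hgap : ∀ s ∈ S, s ∉ Icc (3 / 7 : ℝ) (1 / 2)) {b : ℝ} (hb : b ∈ S) (hlarge : 3 / 7 ≤ b) :
    3 / 7 ≤ ∫ τ, thrVal τ S ∂μ := by
  have hS0 : ∀ s ∈ S, 0 ≤ s := fun s hs => (hS s hs).1
  -- Adjoining `0` to `S` provides a maximum even if every item has size at least `3/7`.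
  obtain ⟨a, ⟨ha, ha_lt⟩, hmax⟩ := exists_max_image {s | s ∈ 0 :: S ∧ s < 3 / 7} id
    ((List.finite_toSet (0 :: S)).subset fun _ h => h.1) ⟨0, by simp⟩
  have haI : a ∈ Icc (0 : ℝ) (3 / 7) := ⟨hmax 0 (by simp), ha_lt.le⟩
  have ha_le (τ : ℝ) (hτ : τ ≤ a) : a ≤ thrVal τ S := by
    rcases List.mem_cons.1 ha with rfl | haS
    exacts [thrVal_nonneg hS0 τ, le_thrVal_of_le_half hS0 haS hτ (by linarith)]
  have one_sub_le : ∀ s ∈ S, a < s → 1 - thrVal 0 S ≤ s := by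
    intro s hs has
    have hs37 : 3 / 7 ≤ s := le_of_not_gt fun h =>
      has.not_ge (hmax s ⟨List.mem_cons_of_mem 0 hs, h⟩)
    have hs12 : 1 / 2 < s := lt_of_not_ge fun h => hgap s hs ⟨hs37, h⟩
    linarith [one_sub_le_thrVal_of_half_le hS0 hs (hS0 s hs) hs12.le]
  have hbound := three_step_le_integral_thrVal hμ hS0 haI le_rfl
    (fun τ hτ => ha_le τ hτ.2) (fun τ hτ => le_thrVal_of_forall_le hS
      (fun s hs h => one_sub_le s hs (hτ.1.trans_le h)) ⟨b, hb, hτ.2.trans hlarge⟩)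
  exact (three_sevenths_le_three_step_of_le haI (ha_le 0 haI.1)).trans hbound

end ExpectedValue

/-- The randomized threshold algorithm drawing `τ` from the measure with CDF `F₁`
is 3/7-competitive relative to the optimal fractional packing
`OPT⁺(S) = min{Σ_t s_t, 1}`. -/
theorem thm_three_sevenths_competitive
    (μ : Measure ℝ) [IsProbabilityMeasure μ]
    (hμ : ∀ x : ℝ, μ (Iic x) = ENNReal.ofReal (F1 x))
    (S : List ℝ) (hS : ∀ s ∈ S, s ∈ Ioc (0:ℝ) 1) :
    (3/7) * min S.sum 1 ≤ ∫ τ, thrVal τ S ∂μ := by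
  have hS01 : ∀ s ∈ S, s ∈ Icc (0 : ℝ) 1 := fun s hs => Ioc_subset_Icc_self (hS s hs)
  have hS0 : ∀ s ∈ S, 0 ≤ s := fun s hs => (hS01 s hs).1
  rcases thrRun_eq_add_sum_or_exists_one_sub_lt hS0 hS0 0 with hfit | ⟨b, hb, hover⟩
  · rw [← thrVal_eq_thrRun, zero_add] at hfit
    linarith [four_sevenths_mul_thrVal_zero_le_integral_thrVal hμ hS0, thrVal_nonneg hS0 0,
      min_le_left S.sum 1]
  suffices 3 / 7 ≤ ∫ τ, thrVal τ S ∂μ by linarith [min_le_right S.sum 1]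
  by_cases hmedium : ∃ s ∈ S, s ∈ Icc (3 / 7 : ℝ) (1 / 2)
  · obtain ⟨s, hs, hsI⟩ := hmedium
    exact three_sevenths_le_integral_thrVal_of_medium_item hμ hS0 hs hsI
  rcases le_total b (3 / 7) with hsmall | hlarge
  · exact three_sevenths_le_integral_thrVal_of_small_overflow hμ hS0 hb hsmall hover.le
  · exact three_sevenths_le_integral_thrVal_of_large_item hμ hS01
      (fun s hs hsI => hmedium ⟨s, hs, hsI⟩) hb hlarge
end

section
/- Fix an integer n ≥ 2 and let ε = 2/(3(n−1)), assuming ε < 1/3. Consider the three arrival sequences S₁ = (1/3, 2/3 + ε), S₂ = (ε, ε, …, ε, 1/3) with n copies of ε (so the ε's sum to 2/3 + ε), and S₃ = (ε, 1). Then OPT⁺(S₁) = OPT⁺(S₂) = OPT⁺(S₃) = 1, and for every τ ∈ [0,1]: (3/7)·THR(τ)(S₁) + (3/7)·THR(τ)(S₂) + (1/7)·THR(τ)(S₃) ≤ 3/7 + (4/7)·ε. Consequently no randomized threshold algorithm has competitive ratio greater than 3/7 relative to OPT⁺. -/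
open Set

/-- Optimal fractional packing `OPT⁺(S) = min{Σ_t s_t, 1}`. -/
noncomputable def optPlus (S : List ℝ) : ℝ := min S.sum 1

/-!
In each of the three sequences a prefix of small items is followed by one item too large to be
added to it. A threshold low enough to accept the prefix is therefore stuck with the prefix, while
a higher threshold forgoes the prefix altogether. The item sizes `ε < 1/3` separate three regimes,
in which the values on `S₁`, `S₂`, `S₃` are at most

* `1/3`, `2/3 + ε`, `ε` for `τ ≤ ε`;
* `1/3`, `1/3`, `1` for `ε < τ ≤ 1/3`;
* `2/3 + ε`, `0`, `1` for `1/3 < τ`.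

The weights `(3/7, 3/7, 1/7)` equalize the three resulting averages up to `O(ε)`.
-/

section Load

/-- The load of the knapsack after `THR(τ)` has processed `S` starting from load `a`. The initial
load is a parameter so that one can induct on `S`; the value `thrVal τ S` is the case `a = 0`. -/
noncomputable def thrLoad (τ a : ℝ) (S : List ℝ) : ℝ :=
  S.foldl (fun acc s => if τ ≤ s ∧ acc + s ≤ 1 then acc + s else acc) a

variable {τ a s : ℝ} {S T : List ℝ}

lemma thrLoad_append : thrLoad τ a (S ++ T) = thrLoad τ (thrLoad τ a S) T :=
  List.foldl_append

lemma thrLoad_cons_of_accept (hτ : τ ≤ s) (hs : a + s ≤ 1) :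
    thrLoad τ a (s :: S) = thrLoad τ (a + s) S :=
  congrArg (thrLoad τ · S) (if_pos ⟨hτ, hs⟩)

lemma thrLoad_cons_of_reject (h : τ ≤ s → 1 < a + s) :
    thrLoad τ a (s :: S) = thrLoad τ a S :=
  congrArg (thrLoad τ · S) (if_neg fun ⟨hτ, hs⟩ => (h hτ).not_ge hs)

lemma thrLoad_eq_self (h : ∀ s ∈ S, τ ≤ s → 1 < a + s) : thrLoad τ a S = a := by
  induction S with
  | nil => rfl
  | cons s S ih =>
    rw [List.forall_mem_cons] at h
    rw [thrLoad_cons_of_reject h.1, ih h.2]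

lemma thrLoad_eq_add_sum (hτ : ∀ s ∈ S, τ ≤ s) (h0 : ∀ s ∈ S, 0 ≤ s) (hS : a + S.sum ≤ 1) :
    thrLoad τ a S = a + S.sum := by
  induction S generalizing a with
  | nil => exact (add_zero a).symm
  | cons s S ih =>
    rw [List.forall_mem_cons] at hτ h0
    rw [List.sum_cons, ← add_assoc] at hS ⊢
    have hs : a + s ≤ 1 := (le_add_of_nonneg_right (List.sum_nonneg h0.2)).trans hS
    rw [thrLoad_cons_of_accept hτ.1 hs, ih hτ.2 h0.2 hS]

lemma thrLoad_le_one (ha : a ≤ 1) : thrLoad τ a S ≤ 1 := by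
  induction S generalizing a with
  | nil => exact ha
  | cons s S ih =>
    by_cases h : τ ≤ s ∧ a + s ≤ 1
    · exact (thrLoad_cons_of_accept h.1 h.2).trans_le (ih h.2)
    · exact (thrLoad_cons_of_reject (by simpa using h)).trans_le (ih ha)

lemma thrLoad_le_add_sum (h0 : ∀ s ∈ S, 0 ≤ s) : thrLoad τ a S ≤ a + S.sum := by
  induction S generalizing a with
  | nil => exact (add_zero a).ge
  | cons s S ih =>
    rw [List.forall_mem_cons] at h0
    rw [List.sum_cons, ← add_assoc]
    by_cases h : τ ≤ s ∧ a + s ≤ 1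
    · exact (thrLoad_cons_of_accept h.1 h.2).trans_le (ih h0.2)
    · calc thrLoad τ a (s :: S) = thrLoad τ a S := thrLoad_cons_of_reject (by simpa using h)
        _ ≤ a + S.sum := ih h0.2
        _ ≤ a + s + S.sum := by gcongr; exact le_add_of_nonneg_right h0.1

end Load

section Value

variable {τ x y : ℝ} {S T : List ℝ}

lemma thrVal_le_one : thrVal τ S ≤ 1 :=
  thrLoad_le_one zero_le_one

lemma thrVal_le_sum (h0 : ∀ s ∈ S, 0 ≤ s) : thrVal τ S ≤ S.sum :=
  (thrLoad_le_add_sum h0).trans_eq (zero_add _)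

lemma thrVal_singleton_le (hx : 0 ≤ x) : thrVal τ [x] ≤ x :=
  (thrVal_le_sum (List.forall_mem_singleton.2 hx)).trans_eq List.sum_singleton

lemma thrVal_append_of_forall_lt (hS : ∀ s ∈ S, s < τ) : thrVal τ (S ++ T) = thrVal τ T :=
  thrLoad_append.trans <|
    congrArg (thrLoad τ · T) (thrLoad_eq_self fun s hs hτ => absurd hτ (hS s hs).not_ge)

lemma thrVal_append_eq_sum (hτ : ∀ s ∈ S, τ ≤ s) (h0 : ∀ s ∈ S, 0 ≤ s)
    (hS : S.sum ≤ 1) (hT : ∀ t ∈ T, 1 < S.sum + t) : thrVal τ (S ++ T) = S.sum := by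
  have hload : thrLoad τ 0 S = S.sum := by
    rw [thrLoad_eq_add_sum hτ h0 (by rwa [zero_add]), zero_add]
  calc thrVal τ (S ++ T) = thrLoad τ (thrLoad τ 0 S) T := thrLoad_append
    _ = S.sum := by rw [hload, thrLoad_eq_self fun t ht _ => hT t ht]

lemma thrVal_cons_of_lt (hx : x < τ) : thrVal τ (x :: T) = thrVal τ T :=
  thrVal_append_of_forall_lt (S := [x]) (List.forall_mem_singleton.2 hx)

lemma thrVal_pair_eq_left (hτ : τ ≤ x) (h0 : 0 ≤ x) (hx : x ≤ 1) (hxy : 1 < x + y) :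
    thrVal τ [x, y] = x := by
  have h : thrVal τ ([x] ++ [y]) = [x].sum := by
    apply thrVal_append_eq_sum <;> simpa
  rwa [List.sum_singleton] at h

end Value

section HardDistribution

/-- The expected value of `THR(τ)` on the random sequence that equals `S₁`, `S₂`, `S₃` with
probabilities `3/7`, `3/7`, `1/7`. The number `n` of small items in `S₂` and their size `ε` are
independent here; the relation between them is a hypothesis where it matters. -/
noncomputable def hardExpectedVal (n : ℕ) (ε τ : ℝ) : ℝ :=
  3 / 7 * thrVal τ [1 / 3, 2 / 3 + ε]
    + 3 / 7 * thrVal τ (List.replicate n ε ++ [1 / 3])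
    + 1 / 7 * thrVal τ [ε, 1]

variable {n : ℕ} {ε τ : ℝ}

lemma hardExpectedVal_of_le (hε0 : 0 < ε) (hε3 : ε ≤ 1 / 3) (hn : n * ε = 2 / 3 + ε) (hτ : τ ≤ ε) :
    hardExpectedVal n ε τ = 3 / 7 + 4 / 7 * ε := by
  have hsum : (List.replicate n ε).sum = 2 / 3 + ε := by
    rw [List.sum_replicate, nsmul_eq_mul, hn]
  have h₁ : thrVal τ [1 / 3, 2 / 3 + ε] = 1 / 3 :=
    thrVal_pair_eq_left (hτ.trans hε3) (by norm_num) (by norm_num) (by linarith)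
  have h₂ : thrVal τ (List.replicate n ε ++ [1 / 3]) = 2 / 3 + ε := by
    rw [← hsum]
    refine thrVal_append_eq_sum ?_ ?_ (by linarith) ?_
    · exact fun s hs => List.eq_of_mem_replicate hs ▸ hτ
    · exact fun s hs => List.eq_of_mem_replicate hs ▸ hε0.le
    · exact List.forall_mem_singleton.2 (by linarith)
  have h₃ : thrVal τ [ε, 1] = ε :=
    thrVal_pair_eq_left hτ hε0.le (by linarith) (by linarith)
  rw [hardExpectedVal, h₁, h₂, h₃]
  ring

lemma hardExpectedVal_le_of_lt (hε0 : 0 < ε) (hτ : ε < τ) :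
    hardExpectedVal n ε τ ≤ 3 / 7 + 4 / 7 * ε := by
  have h₂ : thrVal τ (List.replicate n ε ++ [1 / 3]) = thrVal τ [1 / 3] :=
    thrVal_append_of_forall_lt fun s hs => List.eq_of_mem_replicate hs ▸ hτ
  have h₃ : thrVal τ [ε, 1] ≤ 1 := thrVal_le_one
  rw [hardExpectedVal, h₂]
  rcases le_or_gt τ (1 / 3) with hτ3 | hτ3
  · have h₁ : thrVal τ [1 / 3, 2 / 3 + ε] = 1 / 3 :=
      thrVal_pair_eq_left hτ3 (by norm_num) (by norm_num) (by linarith)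
    have h₂' : thrVal τ [1 / 3] ≤ 1 / 3 := thrVal_singleton_le (by norm_num)
    linarith
  · have h₁ : thrVal τ [1 / 3, 2 / 3 + ε] ≤ 2 / 3 + ε := by
      rw [thrVal_cons_of_lt hτ3]
      exact thrVal_singleton_le (by linarith)
    have h₂' : thrVal τ [1 / 3] = 0 := thrVal_cons_of_lt hτ3
    linarith

end HardDistribution

/-- The hard distribution over three sequences showing that no randomized threshold
algorithm beats 3/7 relative to `OPT⁺`: with `ε = 2/(3(n−1))`,
`S₁ = (1/3, 2/3+ε)`, `S₂ = (ε,…,ε, 1/3)` (`n` copies of `ε`, summing to `2/3+ε`),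
`S₃ = (ε, 1)`; each has `OPT⁺ = 1`, and every deterministic threshold `τ ∈ [0,1]`
earns at most `3/7 + (4/7)ε` under weights `(3/7, 3/7, 1/7)`. -/
theorem thm_three_sevenths_tight
    (n : ℕ) (hn : 2 ≤ n) (ε : ℝ) (hε : ε = 2 / (3 * ((n : ℝ) - 1)))
    (hε3 : ε < 1/3) :
    optPlus [1/3, 2/3 + ε] = 1 ∧
    optPlus (List.replicate n ε ++ [1/3]) = 1 ∧
    optPlus [ε, 1] = 1 ∧
    ∀ τ ∈ Icc (0:ℝ) 1,
      (3/7) * thrVal τ [1/3, 2/3 + ε]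
        + (3/7) * thrVal τ (List.replicate n ε ++ [1/3])
        + (1/7) * thrVal τ [ε, 1]
      ≤ 3/7 + (4/7) * ε := by
  have hn1 : (0 : ℝ) < n - 1 := sub_pos.2 (by exact_mod_cast hn)
  have hε0 : 0 < ε := by rw [hε]; positivity
  have hnε : n * ε = 2 / 3 + ε := by
    rw [hε]
    field_simp
    ring
  have hS₁ : 1 ≤ [1 / 3, 2 / 3 + ε].sum := by
    rw [List.sum_pair]; linarith
  have hS₂ : 1 ≤ (List.replicate n ε ++ [1 / 3]).sum := by
    rw [List.sum_append, List.sum_replicate, List.sum_singleton, nsmul_eq_mul]; linarith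
  have hS₃ : 1 ≤ [ε, 1].sum := by
    rw [List.sum_pair]; linarith
  refine ⟨min_eq_right hS₁, min_eq_right hS₂, min_eq_right hS₃, fun τ _ => ?_⟩
  rcases le_or_gt τ ε with hτ | hτ
  · exact (hardExpectedVal_of_le hε0 hε3.le hnε hτ).le
  · exact hardExpectedVal_le_of_lt hε0 hτ
end

section
/- For every real m with 0 < m ≤ 3/7: m·(4/7 − m)/(1 − 2m) + (4/7)·(1 − 2m) ≥ 3/7, with equality at m = 1/3. -/
/-!
The excess of the left-hand side over `3/7` is `(3m − 1)² / (7(1 − 2m))`. The perfect square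
explains the constants: with `c` in place of `4/7` and `1 − c` in place of `3/7`, the excess times
`1 − 2m` is `(4c − 1)m² + (2 − 5c)m + (2c − 1)`, whose discriminant `c(4 − 7c)` vanishes for
positive `c` only at `c = 4/7`, and the double root is then `m = 1/3`.
-/

theorem threshold_guarantee_sub_three_sevenths {K : Type*} [Field K] [CharZero K] {m : K}
    (hm : 1 - 2 * m ≠ 0) :
    m * ((4 / 7 - m) / (1 - 2 * m)) + (4 / 7) * (1 - 2 * m) - 3 / 7
      = (3 * m - 1) ^ 2 / (7 * (1 - 2 * m)) := by
  have h7 : (7 : K) ≠ 0 := by norm_num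
  rw [eq_div_iff (mul_ne_zero h7 hm)]
  linear_combination 7 * m * div_mul_cancel₀ (4 / 7 - m) hm

theorem thm_key_inequality_three_sevenths_general {K : Type*} [Field K] [LinearOrder K]
    [IsStrictOrderedRing K] {m : K} (hm : m < 1 / 2) :
    3 / 7 ≤ m * ((4 / 7 - m) / (1 - 2 * m)) + (4 / 7) * (1 - 2 * m) ∧
    (m * ((4 / 7 - m) / (1 - 2 * m)) + (4 / 7) * (1 - 2 * m) = 3 / 7 ↔ m = 1 / 3) := by
  have hpos : 0 < 1 - 2 * m := by linarith
  have hexcess := threshold_guarantee_sub_three_sevenths hpos.ne'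
  constructor
  · rw [← sub_nonneg, hexcess]
    positivity
  · have hden : 7 * (1 - 2 * m) ≠ 0 := by positivity
    rw [← sub_eq_zero, hexcess, div_eq_zero_iff, or_iff_left hden, sq_eq_zero_iff, sub_eq_zero,
      eq_div_iff three_ne_zero, mul_comm]

/-- Key real-variable inequality in the 3/7-competitive analysis (case `m < 1/2`):
for `0 < m ≤ 3/7`, `m·F₁(m) + (4/7)(1 − 2m) ≥ 3/7`, with equality at `m = 1/3`,
where `F₁(m) = (4/7 − m)/(1 − 2m)`. -/
theorem thm_key_inequality_three_sevenths :
    (∀ m : ℝ, 0 < m → m ≤ 3/7 →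
      3/7 ≤ m * ((4/7 - m) / (1 - 2*m)) + (4/7) * (1 - 2*m)) ∧
    (1/3 : ℝ) * ((4/7 - 1/3) / (1 - 2*(1/3))) + (4/7) * (1 - 2*(1/3)) = 3/7 :=
  ⟨fun _ _ hm => (thm_key_inequality_three_sevenths_general (hm.trans_lt (by norm_num))).1,
    (thm_key_inequality_three_sevenths_general (by norm_num)).2.mpr rfl⟩
end
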